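/- Consider an irreducible aperiodic positive recurrent GI/G/1-type Markov chain with stationary distribution π and with Σ_{k=0}^{∞} k A_k e < ∞ entrywise, and let l ∈ {2,3,…}. If Σ_{i=0}^{∞} i^l π_{i,j} < ∞ for all phases j = 1,…,m (where π_{i,j} is the stationary probability of state (i,j)), then Σ_{k=1}^{∞} k^l A_k e < ∞ and Σ_{k=1}^{∞} k^l B_k e < ∞ entrywise. -/

import Mathlib

open MeasureTheory Filter Topology
open scoped ENNReal NNReal BigOperators

namespace GIG1

/-- The state space of a `GI/G/1`-type Markov chain: level `i : ℕ`, phase `j : Fin m`. -/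
abbrev S (m : ℕ) := ℕ × Fin m

/-- The transition kernel of the `GI/G/1`-type Markov chain with matrix blocks `A, B`. -/
noncomputable def P {m : ℕ} (A B : ℤ → Matrix (Fin m) (Fin m) ℝ≥0∞) : S m → S m → ℝ≥0∞
  | (0, j), (k, s) => B (k : ℤ) j s
  | (i + 1, j), (0, s) => B (-(i + 1 : ℤ)) j s
  | (i + 1, j), (k + 1, s) => A ((k : ℤ) - (i : ℤ)) j s

/-- `n`-step transition probabilities. -/
noncomputable def Pn {m : ℕ} (P : S m → S m → ℝ≥0∞) : ℕ → S m → S m → ℝ≥0∞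
  | 0, x, y => if x = y then 1 else 0
  | n + 1, x, y => ∑' z : S m, P x z * Pn P n z y

def Stochastic {m : ℕ} (P : S m → S m → ℝ≥0∞) : Prop := ∀ x, ∑' y, P x y = 1

def ChainIrreducible {m : ℕ} (P : S m → S m → ℝ≥0∞) : Prop :=
  ∀ x y, ∃ n, 1 ≤ n ∧ 0 < Pn P n x y

def ChainAperiodic {m : ℕ} (P : S m → S m → ℝ≥0∞) : Prop :=
  ∀ x, ∃ N, ∀ n ≥ N, 0 < Pn P n x x

/-- `pd` is a stationary probability distribution of `P`. -/
def IsStationary {m : ℕ} (P : S m → S m → ℝ≥0∞) (pd : S m → ℝ≥0∞) : Prop :=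
  (∑' x, pd x) = 1 ∧ ∀ y, (∑' x, pd x * P x y) = pd y

/-- `Pr x` is the law of the chain with kernel `P` started at `x`, characterized by its
cylinder probabilities. -/
def IsPathMeasure {m : ℕ} (P : S m → S m → ℝ≥0∞) (Pr : S m → Measure (ℕ → S m)) : Prop :=
  (∀ x, IsProbabilityMeasure (Pr x)) ∧
    ∀ (x : S m) (n : ℕ) (u : ℕ → S m),
      Pr x {ω | ∀ s ≤ n, ω s = u s}
        = if u 0 = x then ∏ s ∈ Finset.range n, P (u s) (u (s + 1)) else 0

/-- The first return time `τ₀` to level 0 (as an element of `ℝ≥0∞`; `∞` if there is no return). -/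
noncomputable def tau0 {m : ℕ} (ω : ℕ → S m) : ℝ≥0∞ :=
  sInf {t : ℝ≥0∞ | ∃ n : ℕ, t = n ∧ 1 ≤ n ∧ (ω n).1 = 0}

/-- The first hitting time `σ₀` of level 0. -/
noncomputable def sigma0 {m : ℕ} (ω : ℕ → S m) : ℝ≥0∞ :=
  sInf {t : ℝ≥0∞ | ∃ n : ℕ, t = n ∧ (ω n).1 = 0}

/-!
Invariance gives `π x * P x y ≤ π y` for all states `x`, `y`, so any weighted sum that is finite
against `π` is finite against each row `P x ·` with `π x ≠ 0`, and irreducibility makes `π`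
positive everywhere. The row of `(0, r)` consists of the rows `r` of the blocks `B_k`, and the row
of `(1, r)` contains the rows `r` of the blocks `A_k`, shifted up by one level.
-/

section Subinvariant

variable {α : Type*} {Q : α → α → ℝ≥0∞} {μ : α → ℝ≥0∞}

/-- Subinvariance `μ Q ≤ μ` of a nonnegative row vector `μ` under a nonnegative kernel `Q`. This is
the part of stationarity that carries moments of `μ` over to the rows of `Q`; neither the total mass
of `μ` nor the row sums of `Q` are normalized. -/
def IsSubinvariant (Q : α → α → ℝ≥0∞) (μ : α → ℝ≥0∞) : Prop :=
  ∀ y, ∑' x, μ x * Q x y ≤ μ y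

theorem IsSubinvariant.mul_le (h : IsSubinvariant Q μ) (x y : α) : μ x * Q x y ≤ μ y :=
  (ENNReal.le_tsum x).trans (h y)

theorem IsSubinvariant.tsum_mul_lt_top (h : IsSubinvariant Q μ) {f : α → ℝ≥0∞}
    (hf : ∑' y, f y * μ y < ⊤) {x : α} (hx : μ x ≠ 0) : ∑' y, f y * Q x y < ⊤ := by
  have mul_tsum_lt_top : μ x * ∑' y, f y * Q x y < ⊤ :=
    calc μ x * ∑' y, f y * Q x y
        = ∑' y, f y * (μ x * Q x y) := by
          simp only [← ENNReal.tsum_mul_left, mul_left_comm]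
      _ ≤ ∑' y, f y * μ y := by
          gcongr with y
          exact h.mul_le x y
      _ < ⊤ := hf
  exact ENNReal.lt_top_of_mul_ne_top_right mul_tsum_lt_top.ne hx

end Subinvariant

section Chain

variable {m : ℕ} {Q : S m → S m → ℝ≥0∞} {μ : S m → ℝ≥0∞}

theorem IsStationary.isSubinvariant (h : IsStationary Q μ) : IsSubinvariant Q μ :=
  fun y => (h.2 y).le

theorem IsStationary.ne_zero (h : IsStationary Q μ) : μ ≠ 0 := by
  rintro rfl
  simpa using h.1

theorem IsSubinvariant.nStep (h : IsSubinvariant Q μ) (n : ℕ) : IsSubinvariant (Pn Q n) μ := by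
  induction n with
  | zero => intro y; simp [Pn]
  | succ n ih =>
    intro y
    calc ∑' x, μ x * ∑' z, Q x z * Pn Q n z y
        = ∑' z, (∑' x, μ x * Q x z) * Pn Q n z y := by
          simp only [← ENNReal.tsum_mul_left, ← ENNReal.tsum_mul_right, ← mul_assoc]
          exact ENNReal.tsum_comm
      _ ≤ ∑' z, μ z * Pn Q n z y := by
          gcongr with z
          exact h z
      _ ≤ μ y := ih y

theorem IsSubinvariant.apply_ne_zero (h : IsSubinvariant Q μ) (hirr : ChainIrreducible Q)
    (hμ : μ ≠ 0) (y : S m) : μ y ≠ 0 := by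
  obtain ⟨x, hx⟩ := Function.ne_iff.1 hμ
  obtain ⟨n, -, hn⟩ := hirr x y
  exact ((ENNReal.mul_pos hx hn.ne').trans_le ((h.nStep n).mul_le x y)).ne'

theorem tsum_level_mul (f : ℕ → ℝ≥0∞) (g : S m → ℝ≥0∞) :
    ∑' x, f x.1 * g x = ∑' i, f i * ∑ j, g (i, j) := by
  simp only [ENNReal.tsum_prod', tsum_fintype, Finset.mul_sum]

theorem tsum_level_mul_lt_top_iff (f : ℕ → ℝ≥0∞) (g : S m → ℝ≥0∞) :
    ∑' x, f x.1 * g x < ⊤ ↔ ∀ j, ∑' i, f i * g (i, j) < ⊤ := by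
  rw [ENNReal.tsum_prod', ENNReal.tsum_comm, tsum_fintype, ENNReal.sum_lt_top]
  simp only [Finset.mem_univ, true_imp_iff]

theorem IsSubinvariant.tsum_level_row_lt_top (h : IsSubinvariant Q μ) (hirr : ChainIrreducible Q)
    (hμ : μ ≠ 0) {f : ℕ → ℝ≥0∞} (hf : ∀ j, ∑' i, f i * μ (i, j) < ⊤) (x : S m) :
    ∑' k, f k * ∑ s, Q x (k, s) < ⊤ := by
  rw [← tsum_level_mul]
  exact h.tsum_mul_lt_top ((tsum_level_mul_lt_top_iff f μ).2 hf) (h.apply_ne_zero hirr hμ x)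

end Chain

section Blocks

variable {m : ℕ} {A B : ℤ → Matrix (Fin m) (Fin m) ℝ≥0∞}

theorem P_zero_apply (r s : Fin m) (k : ℕ) : P A B (0, r) (k, s) = B k r s := by
  simp only [P]

theorem P_one_succ (r s : Fin m) (k : ℕ) : P A B (1, r) (k + 1, s) = A k r s :=
  congrArg (A · r s) (sub_zero (k : ℤ))

theorem stationary_moments_imply_block_moments_general {μ : S m → ℝ≥0∞}
    (hirr : ChainIrreducible (P A B)) (hsub : IsSubinvariant (P A B) μ) (hμ : μ ≠ 0)
    {f : ℕ → ℝ≥0∞} (hf : Monotone f) (hmom : ∀ j, ∑' i, f i * μ (i, j) < ⊤) :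
    (∀ r, ∑' k : ℕ, f k * ∑ s, A k r s < ⊤) ∧ ∀ r, ∑' k : ℕ, f k * ∑ s, B k r s < ⊤ := by
  have row_lt_top := hsub.tsum_level_row_lt_top hirr hμ hmom
  refine ⟨fun r => ?_, fun r => by simpa only [P_zero_apply] using row_lt_top (0, r)⟩
  calc ∑' k : ℕ, f k * ∑ s, A k r s
      ≤ ∑' k : ℕ, f (k + 1) * ∑ s, P A B (1, r) (k + 1, s) := by
        simp only [P_one_succ]
        gcongr with k
        exact hf k.le_succ
    _ ≤ ∑' k, f k * ∑ s, P A B (1, r) (k, s) :=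
        ENNReal.tsum_comp_le_tsum_of_injective Nat.succ_injective _
    _ < ⊤ := row_lt_top (1, r)

end Blocks

/-- For an irreducible aperiodic positive recurrent `GI/G/1`-type chain
with stationary distribution `π`, `∑ k A_k e < ∞` entrywise and `l ≥ 2`: if
`∑_i i^l π_{i,j} < ∞` for all phases `j`, then `∑ k^l A_k e < ∞` and `∑ k^l B_k e < ∞`
entrywise. -/
theorem stationary_moments_imply_block_moments {m : ℕ} (hm : 0 < m)
    (A B : ℤ → Matrix (Fin m) (Fin m) ℝ≥0∞)
    (hP : Stochastic (P A B))
    (hirr : ChainIrreducible (P A B)) (hap : ChainAperiodic (P A B))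
    (pd : S m → ℝ≥0∞) (hpd : IsStationary (P A B) pd)
    (l : ℕ) (hl : 2 ≤ l)
    (hAmom : ∀ r : Fin m, (∑' k : ℕ, (k : ℝ≥0∞) * ∑ s, A (k : ℤ) r s) < ⊤)
    (hpimom : ∀ j : Fin m, (∑' i : ℕ, (i : ℝ≥0∞) ^ l * pd (i, j)) < ⊤) :
    (∀ r : Fin m, (∑' k : ℕ, (k : ℝ≥0∞) ^ l * ∑ s, A (k : ℤ) r s) < ⊤) ∧
      (∀ r : Fin m, (∑' k : ℕ, (k : ℝ≥0∞) ^ l * ∑ s, B (k : ℤ) r s) < ⊤) :=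
  stationary_moments_imply_block_moments_general hirr hpd.isSubinvariant hpd.ne_zero
    (fun _ _ hij => pow_le_pow_left' (Nat.cast_le.2 hij) l) hpimom

end GIG1
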